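/- Existence of a discrete conservative approximation of a gradient (Lemma 4.1). Let a ∈ ℝ², h > 0, R > 0, and g ∈ C³(ℝ²). Define ε(h) := sup { |D_j³g(x) − D_j³g(y)| : |x − a| ≤ R + h, |y − a| ≤ R + h, |x − y| ≤ h√2, j = 1, 2 }, where D_j³g is the third pure partial derivative of g in the j-th coordinate. Then there exists a discrete conservative vector field f = (f¹, f²) on the grid G(a,h) = a + hℤ² such that sup { |f(x) − (∇g)(x)| : x ∈ G(a,h), |x − a| ≤ R } ≤ (R/6) · h · ε(h). -/

import Mathlib

/- Shared discrete-path infrastructure. -/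

namespace DiscretePaths

/-- The sign `±1` associated to a boolean orientation. -/
noncomputable def sgn (b : Bool) : ℝ := if b then 1 else -1

/-- The vector `μ h e_j` of an oriented grid edge, where the edge is encoded as
`e = (j, b)` with `μ = sgn b`. -/
noncomputable def stepVec (d : ℕ) (h : ℝ) (e : Fin d × Bool) : Fin d → ℝ :=
  fun i => if i = e.1 then sgn e.2 * h else 0

/-- The endpoint of a discrete path starting at `b`, given by its list of oriented edges. -/
noncomputable def pathEnd (d : ℕ) (h : ℝ) (b : Fin d → ℝ) :
    List (Fin d × Bool) → (Fin d → ℝ)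
  | [] => b
  | e :: γ => pathEnd d h (fun i => b i + stepVec d h e i) γ

/-- The trapezoidal sum `T_γ(f, γ'₀) h` of the vector field `f` over the discrete path
starting at `b` with oriented edges `γ`. -/
noncomputable def trapSum (d : ℕ) (h : ℝ) (f : (Fin d → ℝ) → Fin d → ℝ)
    (b : Fin d → ℝ) : List (Fin d × Bool) → ℝ
  | [] => 0
  | e :: γ => h / 2 * sgn e.2 * (f b e.1 + f (fun i => b i + stepVec d h e i) e.1)
      + trapSum d h f (fun i => b i + stepVec d h e i) γ

/-- Membership in the grid `G(a,h) = a + hℤ^d`. -/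
def InGrid (d : ℕ) (a : Fin d → ℝ) (h : ℝ) (x : Fin d → ℝ) : Prop :=
  ∃ k : Fin d → ℤ, ∀ i, x i = a i + h * k i

/-- A vector field on the grid `G(a,h)` is discrete conservative if its trapezoidal sum
over every closed discrete path vanishes. -/
def DiscreteConservative (d : ℕ) (a : Fin d → ℝ) (h : ℝ)
    (f : (Fin d → ℝ) → Fin d → ℝ) : Prop :=
  ∀ b, InGrid d a h b → ∀ γ : List (Fin d × Bool), pathEnd d h b γ = b →
    trapSum d h f b γ = 0

end DiscretePaths

open DiscretePaths

/-- The partial derivative of `g : ℝ² → ℝ` in the `j`-th coordinate direction. -/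
noncomputable def pderiv2 (j : Fin 2) (g : (Fin 2 → ℝ) → ℝ) : (Fin 2 → ℝ) → ℝ :=
  fun x => fderiv ℝ g x (Pi.single j 1)

/-- The Euclidean norm on the plane (represented as `Fin 2 → ℝ`). -/
noncomputable def enorm2 (x : Fin 2 → ℝ) : ℝ := Real.sqrt (x 0 ^ 2 + x 1 ^ 2)

/-!
Put `f = ∇g + (2/h) e` on the grid. With `Φ x = g x + ∑ j, c j / h * x j`, the trapezoidal sum of
`f` along an edge in direction `e_j` equals the increment of `Φ` as soon as, along every grid line,
`e n + e (n + 1) = c - w n`, where `w` is the trapezoidal error of `∂_j g` on the edges of the line.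
The recursion leaves one free value per line. Taking `e 0` to be the mean of `e 1` and `e (-1)`
makes `e` drift by at most half the oscillation of `w` between adjacent edges per step, and one
constant `c` for all lines in direction `e_j` makes `e 0` grow no faster with the distance of the
line from `a`. Finally, the difference of the trapezoidal errors on two edges is the trapezoidal
error of a difference, bounded by `h ^ 3 / 12` times the oscillation of the third derivative.
-/

section AlternatingRecursion

theorem exists_int_seq_of_equiv {α : Type*} (s : ℤ → α ≃ α) (x : α) :
    ∃ u : ℤ → α, u 0 = x ∧ ∀ n, u (n + 1) = s n (u n) := by
  let up : ℕ → α := fun n => Nat.rec x (fun k y => s k y) n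
  let down : ℕ → α := fun n =>
    Nat.rec ((s (-1)).symm x) (fun k y => (s (Int.negSucc (k + 1))).symm y) n
  refine ⟨fun n => Int.rec up down n, rfl, ?_⟩
  rintro (n | _ | n)
  · rfl
  · exact ((s (-1)).apply_symm_apply x).symm
  · exact ((s (Int.negSucc (n + 1))).apply_symm_apply (down n)).symm

theorem dist_le_mul_of_two_step {α : Type*} [PseudoMetricSpace α] {u : ℕ → α} {η : ℝ} :
    ∀ n : ℕ, (0 < n → dist (u 0) (u 1) ≤ η) →
      (∀ i, i + 2 ≤ n → dist (u i) (u (i + 2)) ≤ 2 * η) → dist (u 0) (u n) ≤ n * η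
  | 0, _, _ => by simp
  | 1, h1, _ => by simpa using h1 one_pos
  | n + 2, h1, h2 => by
    have ih := dist_le_mul_of_two_step n (fun _ => h1 (by lia)) fun i hi => h2 i (by lia)
    calc dist (u 0) (u (n + 2)) ≤ dist (u 0) (u n) + dist (u n) (u (n + 2)) := dist_triangle _ _ _
      _ ≤ n * η + 2 * η := add_le_add ih (h2 n le_rfl)
      _ = (n + 2 : ℕ) * η := by push_cast; ring

theorem dist_le_abs_mul_of_step {α : Type*} [PseudoMetricSpace α] {v : ℤ → α} {m : ℤ} {δ : ℝ}
    (hv : ∀ i, -|m| ≤ i → i < |m| → dist (v i) (v (i + 1)) ≤ δ) :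
    dist (v 0) (v m) ≤ |m| * δ := by
  wlog hm : 0 ≤ m generalizing v m
  · have := this (v := fun i => v (-i)) (m := -m)
      (fun i h1 h2 => by
        rw [abs_neg] at h1 h2
        rw [dist_comm]
        simpa using hv (-(i + 1)) (by lia) (by lia)) (by lia)
    simpa using this
  lift m to ℕ using hm
  simp only [Nat.abs_cast] at hv ⊢
  have := dist_le_range_sum_of_dist_le (f := fun i : ℕ => v i) m (d := fun _ => δ)
    fun {i} hi => by simpa using hv i (by lia) (by lia)
  simpa using this

variable {E : Type*} [SeminormedAddCommGroup E] [NormedSpace ℝ E]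

theorem exists_add_shift_eq (v : ℤ → E) :
    ∃ u : ℤ → E, u 0 = (1 / 4 : ℝ) • (v 0 + v (-1)) ∧ ∀ n, u n + u (n + 1) = v n := by
  obtain ⟨u, hu0, hu⟩ := exists_int_seq_of_equiv (fun n => Equiv.subLeft (v n))
    ((1 / 4 : ℝ) • (v 0 + v (-1)))
  exact ⟨u, hu0, fun n => by simp [hu]⟩

theorem dist_le_mul_of_add_shift_eq {u v : ℤ → E} (hu0 : u 0 = (1 / 4 : ℝ) • (v 0 + v (-1)))
    (hu : ∀ n, u n + u (n + 1) = v n) {n : ℤ} {δ : ℝ}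
    (hv : ∀ i, |i| < |n| → dist (v (i - 1)) (v i) ≤ δ) :
    dist (u 0) (u n) ≤ |n| * (δ / 2) := by
  wlog hn : 0 ≤ n generalizing u v n
  · have := this (u := fun i => u (-i)) (v := fun i => v (-i - 1)) (n := -n)
      (by simpa [add_comm (v 0)] using hu0)
      (fun i => by
        rw [← hu, show -(i + 1) = -i - 1 by ring, sub_add_cancel, add_comm])
      (fun i hi => by
        rw [abs_neg] at hi
        rw [dist_comm, show -(i - 1) - 1 = -i by ring]
        exact hv (-i) (by rwa [abs_neg])) (by lia)
    simpa using this
  lift n to ℕ using hn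
  simp only [Nat.abs_cast] at hv ⊢
  refine dist_le_mul_of_two_step (u := fun i : ℕ => u i) n (fun hn => ?_) fun i hi => ?_
  · -- The choice of `u 0` is what halves the first step.
    have first_step : u 0 - u 1 = (1 / 2 : ℝ) • (v (-1) - v 0) := by
      have h01 : u 1 = v 0 - u 0 := eq_sub_of_add_eq' (hu 0)
      rw [h01, hu0]
      module
    have := hv 0 (by simpa using hn)
    simp only [zero_sub, dist_eq_norm] at this
    simp only [Nat.cast_zero, Nat.cast_one, dist_eq_norm, first_step, norm_smul]
    norm_num
    linarith
  · have two_step : u i - u (i + 2) = v i - v (i + 1) := by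
      rw [← hu i, ← hu (i + 1), add_assoc (i : ℤ), one_add_one_eq_two]
      abel
    have := hv (i + 1) (by rw [abs_of_nonneg (by lia)]; lia)
    rw [add_sub_cancel_right, dist_eq_norm] at this
    simp only [Nat.cast_add, Nat.cast_ofNat, dist_eq_norm, two_step]
    linarith

theorem exists_alternating_correction (w : ℤ → ℤ → E) :
    ∃ (c : E) (e : ℤ → ℤ → E), (∀ n m, e n m + e (n + 1) m = c - w n m) ∧
      ∀ (n m : ℤ) (δ : ℝ), (∀ i, |i| < |n| → dist (w (i - 1) m) (w i m) ≤ δ) →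
        (∀ s, s = 0 ∨ s = -1 → ∀ i, -|m| ≤ i → i < |m| → dist (w s i) (w s (i + 1)) ≤ δ) →
        ‖e n m‖ ≤ (|n| + |m|) * (δ / 2) := by
  let c : E := (1 / 2 : ℝ) • (w 0 0 + w (-1) 0)
  choose e he0 he using fun m => exists_add_shift_eq fun n => c - w n m
  refine ⟨c, fun n m => e m n, fun n m => he m n, fun n m δ hrow hcol => ?_⟩
  have drift : dist (e m 0) (e m n) ≤ |n| * (δ / 2) :=
    dist_le_mul_of_add_shift_eq (he0 m) (he m) fun i hi => by
      simpa only [dist_sub_left] using hrow i hi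
  have column (s : ℤ) (hs : s = 0 ∨ s = -1) : ‖w s 0 - w s m‖ ≤ |m| * δ := by
    simpa only [dist_eq_norm] using dist_le_abs_mul_of_step (hcol s hs)
  have start : ‖e m 0‖ ≤ |m| * (δ / 2) := by
    have e_zero : e m 0 = (1 / 4 : ℝ) • ((w 0 0 - w 0 m) + (w (-1) 0 - w (-1) m)) := by
      rw [he0]
      module
    rw [e_zero, norm_smul]
    have := norm_add_le_of_le (column 0 (.inl rfl)) (column (-1) (.inr rfl))
    rw [Real.norm_of_nonneg (by norm_num)]
    linarith
  have := norm_le_norm_add_norm_sub (e m 0) (e m n)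
  rw [← dist_eq_norm] at this
  linarith

end AlternatingRecursion

section Conservative

variable {d : ℕ} {a x : Fin d → ℝ} {h : ℝ}

/-- The point of the grid `G(a,h)` with integer coordinates `k`. -/
noncomputable def gridPoint (a : Fin d → ℝ) (h : ℝ) (k : Fin d → ℤ) : Fin d → ℝ :=
  fun i => a i + h * k i

theorem inGrid_gridPoint (k : Fin d → ℤ) : InGrid d a h (gridPoint a h k) :=
  ⟨k, fun _ => rfl⟩

theorem gridPoint_injective (a : Fin d → ℝ) (hh : h ≠ 0) : Function.Injective (gridPoint a h) :=
  fun k l hkl => funext fun i => by simpa [gridPoint, hh] using congrFun hkl i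

theorem gridPoint_add_single (k : Fin d → ℤ) (j : Fin d) (n : ℤ) :
    gridPoint a h (k + Pi.single j n) = gridPoint a h k + Pi.single j (n * h) := by
  ext i
  obtain rfl | hij := eq_or_ne i j
  · simp [gridPoint]
    ring
  · simp [gridPoint, hij]

theorem exists_gridPoint_eq_of_inGrid (hx : InGrid d a h x) : ∃ k, gridPoint a h k = x :=
  hx.imp fun _ hk => funext fun i => (hk i).symm

theorem add_stepVec (x : Fin d → ℝ) (h : ℝ) (e : Fin d × Bool) :
    (fun i => x i + stepVec d h e i) = x + Pi.single e.1 (sgn e.2 * h) := by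
  ext i
  simp [stepVec, Pi.single_apply]

theorem inGrid_add_stepVec (hx : InGrid d a h x) (e : Fin d × Bool) :
    InGrid d a h fun i => x i + stepVec d h e i := by
  obtain ⟨k, rfl⟩ := exists_gridPoint_eq_of_inGrid hx
  have sgn_eq : sgn e.2 = (if e.2 then 1 else -1 : ℤ) := by
    unfold sgn
    split_ifs <;> simp
  rw [add_stepVec, sgn_eq, ← gridPoint_add_single]
  exact inGrid_gridPoint _

/-- `Φ` is a discrete potential of `f` on the grid `G(a,h)`: its increment along each positively
oriented edge is the trapezoidal sum of `f` over that edge. -/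
def IsTrapezoidalPotential (a : Fin d → ℝ) (h : ℝ) (f : (Fin d → ℝ) → Fin d → ℝ)
    (Φ : (Fin d → ℝ) → ℝ) : Prop :=
  ∀ x, InGrid d a h x → ∀ j,
    h / 2 * (f x j + f (x + Pi.single j h) j) = Φ (x + Pi.single j h) - Φ x

variable {f : (Fin d → ℝ) → Fin d → ℝ} {Φ : (Fin d → ℝ) → ℝ}

theorem IsTrapezoidalPotential.edge_eq_sub (hΦ : IsTrapezoidalPotential a h f Φ)
    (hx : InGrid d a h x) (e : Fin d × Bool) :
    h / 2 * sgn e.2 * (f x e.1 + f (fun i => x i + stepVec d h e i) e.1) =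
      Φ (fun i => x i + stepVec d h e i) - Φ x := by
  have hy := inGrid_add_stepVec hx e
  rw [add_stepVec] at hy ⊢
  obtain ⟨j, _ | _⟩ := e
  · have := hΦ _ hy j
    simp only [sgn, Bool.false_eq_true, if_false, neg_one_mul, Pi.single_neg,
      neg_add_cancel_right] at this ⊢
    linarith
  · simpa [sgn] using hΦ x hx j

theorem IsTrapezoidalPotential.trapSum_eq_sub (hΦ : IsTrapezoidalPotential a h f Φ)
    (γ : List (Fin d × Bool)) (hx : InGrid d a h x) :
    trapSum d h f x γ = Φ (pathEnd d h x γ) - Φ x := by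
  induction γ generalizing x with
  | nil => simp [trapSum, pathEnd]
  | cons e γ ih =>
    rw [trapSum, pathEnd, ih (inGrid_add_stepVec hx e), hΦ.edge_eq_sub hx e]
    ring

theorem IsTrapezoidalPotential.discreteConservative (hΦ : IsTrapezoidalPotential a h f Φ) :
    DiscreteConservative d a h f := fun b hb γ hγ => by
  rw [hΦ.trapSum_eq_sub γ hb, hγ, sub_self]

end Conservative

section Trapezoid

theorem abs_trapezoid_sub_le {φ : ℝ → ℝ} (hφ : ContDiff ℝ 3 φ) {s t M : ℝ}
    (hM : ∀ x ∈ Set.uIcc s t, |iteratedDeriv 3 φ x| ≤ M) :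
    |(t - s) / 2 * (deriv φ s + deriv φ t) - (φ t - φ s)| ≤ |t - s| ^ 3 / 12 * M := by
  obtain rfl | hst := eq_or_ne s t
  · simp
  have c2 : ContDiff ℝ 2 (deriv φ) := hφ.deriv' (n := 2)
  have bound (x : ℝ) : |iteratedDerivWithin 2 (deriv φ) (Set.uIcc s t) x| ≤ M := by
    by_cases hx : x ∈ Set.uIcc s t
    · rw [iteratedDerivWithin_eq_iteratedDeriv (uniqueDiffOn_uIcc hst)
        c2.contDiffAt hx, ← iteratedDeriv_succ']
      exact hM x hx
    · rw [iteratedDerivWithin_succ,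
        derivWithin_zero_of_notMem_closure (by rwa [Set.uIcc, isClosed_Icc.closure_eq]), abs_zero]
      exact (abs_nonneg _).trans (hM s Set.left_mem_uIcc)
  have ftc : ∫ x in s..t, deriv φ x = φ t - φ s :=
    intervalIntegral.integral_deriv_eq_sub (fun x _ => hφ.differentiable (by norm_num) x)
      (c2.continuous.intervalIntegrable s t)
  have := trapezoidal_error_le_of_c2 c2.contDiffOn bound one_pos
  rw [trapezoidal_error, trapezoidal_integral_one, ftc] at this
  exact this.trans_eq (by push_cast; ring)

variable {g : (Fin 2 → ℝ) → ℝ} {j : Fin 2}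

theorem contDiff_pderiv2 {m n : WithTop ℕ∞} (hg : ContDiff ℝ n g) (hmn : m + 1 ≤ n) :
    ContDiff ℝ m (pderiv2 j g) :=
  (hg.fderiv_right hmn).clm_apply contDiff_const

theorem continuous_iterate_pderiv2 {n : ℕ} (hg : ContDiff ℝ n g) :
    Continuous ((pderiv2 j)^[n] g) := by
  induction n generalizing g with
  | zero => exact hg.continuous
  | succ n ih => exact ih (contDiff_pderiv2 hg (by simp))

theorem hasDerivAt_add_single (hg : Differentiable ℝ g) (p : Fin 2 → ℝ) (t : ℝ) :
    HasDerivAt (fun t => g (p + Pi.single j t)) (pderiv2 j g (p + Pi.single j t)) t :=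
  (hg _).hasFDerivAt.comp_hasDerivAt t ((hasDerivAt_single j t).const_add p)

theorem iteratedDeriv_add_single {n : ℕ} (hg : ContDiff ℝ n g) (p : Fin 2 → ℝ) :
    iteratedDeriv n (fun t => g (p + Pi.single j t)) =
      fun t => (pderiv2 j)^[n] g (p + Pi.single j t) := by
  induction n generalizing g with
  | zero => simp
  | succ n ih =>
    have deriv_eq : deriv (fun t => g (p + Pi.single j t)) =
        fun t => pderiv2 j g (p + Pi.single j t) :=
      funext fun t => (hasDerivAt_add_single (hg.differentiable (by simp)) p t).deriv
    rw [iteratedDeriv_succ', deriv_eq, ih (contDiff_pderiv2 hg (by simp)),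
      Function.iterate_succ_apply]

/-- The error of the trapezoidal rule for the gradient of `g` on the edge from `p` to
`p + h e_j`. -/
noncomputable def edgeDefect (g : (Fin 2 → ℝ) → ℝ) (h : ℝ) (j : Fin 2) (p : Fin 2 → ℝ) : ℝ :=
  h / 2 * (pderiv2 j g p + pderiv2 j g (p + Pi.single j h)) - (g (p + Pi.single j h) - g p)

theorem abs_edgeDefect_sub_le (hg : ContDiff ℝ 3 g) {h M : ℝ} {p q : Fin 2 → ℝ}
    (hM : ∀ t ∈ Set.uIcc 0 h, |(pderiv2 j)^[3] g (p + Pi.single j t) -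
      (pderiv2 j)^[3] g (q + Pi.single j t)| ≤ M) :
    |edgeDefect g h j p - edgeDefect g h j q| ≤ |h| ^ 3 / 12 * M := by
  have along (r : Fin 2 → ℝ) : ContDiff ℝ 3 fun t => g (r + Pi.single j t) :=
    hg.comp (contDiff_const.add (contDiff_single (fun _ => ℝ) 3 j))
  let φ : ℝ → ℝ := fun t => g (p + Pi.single j t) - g (q + Pi.single j t)
  have deriv_φ (t : ℝ) :
      deriv φ t = pderiv2 j g (p + Pi.single j t) - pderiv2 j g (q + Pi.single j t) :=
    have dg := hg.differentiable (by norm_num)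
    ((hasDerivAt_add_single dg p t).sub (hasDerivAt_add_single dg q t)).deriv
  have third_deriv_φ (t : ℝ) : iteratedDeriv 3 φ t =
      (pderiv2 j)^[3] g (p + Pi.single j t) - (pderiv2 j)^[3] g (q + Pi.single j t) := by
    rw [show φ = (fun t => g (p + Pi.single j t)) - fun t => g (q + Pi.single j t) from rfl,
      iteratedDeriv_sub (along p).contDiffAt (along q).contDiffAt,
      iteratedDeriv_add_single hg, iteratedDeriv_add_single hg]
  have := abs_trapezoid_sub_le (φ := φ) ((along p).sub (along q))
    fun t ht => (third_deriv_φ t).symm ▸ hM t ht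
  simp only [deriv_φ, φ, Pi.single_zero, add_zero, sub_zero] at this
  refine (congrArg abs ?_).trans_le this
  unfold edgeDefect
  ring

end Trapezoid

section Oscillation

variable {a p q : Fin 2 → ℝ} {h R : ℝ} {g : (Fin 2 → ℝ) → ℝ} {j : Fin 2}

theorem enorm2_eq_norm (x : Fin 2 → ℝ) : enorm2 x = ‖WithLp.toLp 2 x‖ := by
  simp [enorm2, EuclideanSpace.norm_eq, Fin.sum_univ_two]

theorem abs_apply_le_enorm2 (x : Fin 2 → ℝ) (i : Fin 2) : |x i| ≤ enorm2 x := by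
  rw [enorm2_eq_norm]
  exact PiLp.norm_apply_le (WithLp.toLp 2 x) i

theorem enorm2_le_of_abs_le {x y : Fin 2 → ℝ} {c : ℝ} (hc : 0 ≤ c)
    (hxy : ∀ j, |x j| ≤ c * (|y 0| + |y 1|)) : enorm2 x ≤ 2 * c * enorm2 y := by
  have sq_le (j : Fin 2) : x j ^ 2 ≤ c ^ 2 * (2 * (y 0 ^ 2 + y 1 ^ 2)) := by
    calc x j ^ 2 ≤ (c * (|y 0| + |y 1|)) ^ 2 := sq_le_sq.mpr ((hxy j).trans (le_abs_self _))
      _ = c ^ 2 * (|y 0| + |y 1|) ^ 2 := mul_pow _ _ _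
      _ ≤ c ^ 2 * (2 * (y 0 ^ 2 + y 1 ^ 2)) := by
        rw [← sq_abs (y 0), ← sq_abs (y 1)]
        gcongr
        exact add_sq_le
  refine Real.sqrt_le_iff.mpr ⟨mul_nonneg (by positivity) (Real.sqrt_nonneg _), ?_⟩
  rw [mul_pow, enorm2, Real.sq_sqrt (by positivity)]
  linarith [sq_le 0, sq_le 1]

theorem convex_setOf_enorm2_sub_le (a : Fin 2 → ℝ) (r : ℝ) :
    Convex ℝ {x | enorm2 (x - a) ≤ r} := by
  have disc_eq : {x | enorm2 (x - a) ≤ r} =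
      WithLp.toLp 2 ⁻¹' Metric.closedBall (WithLp.toLp 2 a) r := by
    ext x
    simp [enorm2_eq_norm, dist_eq_norm]
  rw [disc_eq]
  exact (convex_closedBall _ r).linear_preimage
    (WithLp.linearEquiv 2 ℝ (Fin 2 → ℝ)).symm.toLinearMap

/-- The oscillation `ε(h)` of the pure third derivatives of `g` at distance at most `h√2` inside the
disc of radius `R + h` about `a`. -/
noncomputable def pureThirdOscillation (a : Fin 2 → ℝ) (h R : ℝ) (g : (Fin 2 → ℝ) → ℝ) : ℝ :=
  sSup {c : ℝ | ∃ x y : Fin 2 → ℝ, ∃ j : Fin 2,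
    enorm2 (x - a) ≤ R + h ∧ enorm2 (y - a) ≤ R + h ∧ enorm2 (x - y) ≤ h * Real.sqrt 2 ∧
    c = |(pderiv2 j)^[3] g x - (pderiv2 j)^[3] g y|}

theorem pureThirdOscillation_nonneg : 0 ≤ pureThirdOscillation a h R g :=
  Real.sSup_nonneg fun _ ⟨_, _, _, _, _, _, hc⟩ => hc ▸ abs_nonneg _

theorem exists_abs_iterate_pderiv2_le {n : ℕ} (hg : ContDiff ℝ n g) (a : Fin 2 → ℝ)
    (r : ℝ) :
    ∃ C, ∀ x, enorm2 (x - a) ≤ r → ∀ j, |(pderiv2 j)^[n] g x| ≤ C := by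
  have cont : Continuous fun x j => (pderiv2 j)^[n] g x :=
    continuous_pi fun _ => continuous_iterate_pderiv2 hg
  obtain ⟨C, hC⟩ := (isCompact_closedBall a r).exists_bound_of_continuousOn cont.continuousOn
  refine ⟨C, fun x hx j => (norm_le_pi_norm (fun j => (pderiv2 j)^[n] g x) j).trans (hC x ?_)⟩
  rw [Metric.mem_closedBall, dist_pi_le_iff ((Real.sqrt_nonneg _).trans hx)]
  exact fun i => (abs_apply_le_enorm2 (x - a) i).trans hx

theorem abs_sub_le_pureThirdOscillation (hg : ContDiff ℝ 3 g) (hp : enorm2 (p - a) ≤ R + h)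
    (hq : enorm2 (q - a) ≤ R + h) (hpq : enorm2 (p - q) ≤ h * Real.sqrt 2) :
    |(pderiv2 j)^[3] g p - (pderiv2 j)^[3] g q| ≤ pureThirdOscillation a h R g := by
  obtain ⟨C, hC⟩ := exists_abs_iterate_pderiv2_le hg a (R + h)
  refine le_csSup ⟨C + C, ?_⟩ ⟨p, q, j, hp, hq, hpq, rfl⟩
  rintro _ ⟨x, y, i, hx, hy, -, rfl⟩
  exact (abs_sub _ _).trans (add_le_add (hC x hx i) (hC y hy i))

theorem abs_edgeDefect_sub_le_oscillation (hg : ContDiff ℝ 3 g) (hh : 0 < h)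
    (hp : enorm2 (p - a) ≤ R + h) (hp' : enorm2 (p + Pi.single j h - a) ≤ R + h)
    (hq : enorm2 (q - a) ≤ R + h) (hq' : enorm2 (q + Pi.single j h - a) ≤ R + h)
    (hpq : enorm2 (p - q) ≤ h * Real.sqrt 2) :
    |edgeDefect g h j p - edgeDefect g h j q| ≤ h ^ 3 / 12 * pureThirdOscillation a h R g := by
  have mem_disc {r : Fin 2 → ℝ} (hr : enorm2 (r - a) ≤ R + h)
      (hr' : enorm2 (r + Pi.single j h - a) ≤ R + h) {t : ℝ} (ht : t ∈ Set.Icc 0 h) :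
      enorm2 (r + Pi.single j t - a) ≤ R + h := by
    have := (convex_setOf_enorm2_sub_le a (R + h)).add_smul_mem hr hr'
      (t := t / h) ⟨div_nonneg ht.1 hh.le, div_le_one_of_le₀ ht.2 hh.le⟩
    rwa [← Pi.single_smul, smul_eq_mul, div_mul_cancel₀ _ hh.ne'] at this
  refine (abs_edgeDefect_sub_le hg fun t ht => ?_).trans_eq (by rw [abs_of_pos hh])
  rw [Set.uIcc_of_le hh.le] at ht
  refine abs_sub_le_pureThirdOscillation hg (mem_disc hp hp' ht) (mem_disc hq hq' ht) ?_
  rwa [add_sub_add_right_eq_sub]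

end Oscillation

section Construction

variable {a : Fin 2 → ℝ} {h R : ℝ} {g : (Fin 2 → ℝ) → ℝ}

/-- The point of `ℤ²` with `j`-th coordinate `n` and other coordinate `m`; fixing `m` parametrizes
a lattice line in direction `e_j` by `n`. -/
def latticePoint (j : Fin 2) (n m : ℤ) : Fin 2 → ℤ :=
  Function.update (fun _ => m) j n

theorem latticePoint_apply_rev (j : Fin 2) (k : Fin 2 → ℤ) :
    latticePoint j (k j) (k j.rev) = k := by
  ext i
  fin_cases j <;> fin_cases i <;> simp [latticePoint]

theorem latticePoint_add_single (j : Fin 2) (n m : ℤ) :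
    latticePoint j n m + Pi.single j 1 = latticePoint j (n + 1) m := by
  ext i
  obtain rfl | hij := eq_or_ne i j
  · simp [latticePoint]
  · simp [latticePoint, hij]

theorem gridPoint_latticePoint_add_single (j : Fin 2) (n m : ℤ) :
    gridPoint a h (latticePoint j n m) + Pi.single j h =
      gridPoint a h (latticePoint j (n + 1) m) := by
  rw [← latticePoint_add_single, gridPoint_add_single, Int.cast_one, one_mul]

theorem enorm2_gridPoint_sub_gridPoint (j : Fin 2) (hh : 0 ≤ h) (n m n' m' : ℤ) :
    enorm2 (gridPoint a h (latticePoint j n m) - gridPoint a h (latticePoint j n' m')) =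
      h * √((n - n' : ℝ) ^ 2 + (m - m' : ℝ) ^ 2) := by
  rw [← Real.sqrt_sq hh, ← Real.sqrt_mul (sq_nonneg h), Real.sqrt_sq hh, enorm2]
  congr 1
  fin_cases j <;> simp [gridPoint, latticePoint] <;> ring

theorem enorm2_gridPoint_sub (j : Fin 2) (hh : 0 ≤ h) (n m : ℤ) :
    enorm2 (gridPoint a h (latticePoint j n m) - a) = h * √((n : ℝ) ^ 2 + (m : ℝ) ^ 2) := by
  have center : gridPoint a h (latticePoint j 0 0) = a := by
    ext i
    simp [gridPoint, latticePoint]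
  simpa [center] using enorm2_gridPoint_sub_gridPoint (a := a) j hh n m 0 0

theorem enorm2_gridPoint_sub_le_add {j : Fin 2} (hh : 0 ≤ h) {n m p q : ℤ} (hp : |p| ≤ |n| + 1)
    (hq : |q| ≤ |m|) :
    enorm2 (gridPoint a h (latticePoint j p q) - a) ≤
      enorm2 (gridPoint a h (latticePoint j n m) - a) + h := by
  set s := √((n : ℝ) ^ 2 + (m : ℝ) ^ 2) with hs
  have hp' : |(p : ℝ)| ≤ |(n : ℝ)| + 1 := mod_cast hp
  have hq' : (q : ℝ) ^ 2 ≤ (m : ℝ) ^ 2 := sq_le_sq.mpr (mod_cast hq)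
  have n_le : |(n : ℝ)| ≤ s := Real.abs_le_sqrt (by linarith [sq_nonneg (m : ℝ)])
  have s_sq : s ^ 2 = (n : ℝ) ^ 2 + (m : ℝ) ^ 2 := Real.sq_sqrt (by positivity)
  have sqrt_le : √((p : ℝ) ^ 2 + (q : ℝ) ^ 2) ≤ s + 1 := by
    refine Real.sqrt_le_iff.mpr ⟨by positivity, ?_⟩
    calc (p : ℝ) ^ 2 + (q : ℝ) ^ 2 ≤ (|(n : ℝ)| + 1) ^ 2 + (m : ℝ) ^ 2 := by
          rw [← sq_abs (p : ℝ)]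
          gcongr
      _ = s ^ 2 + 2 * |(n : ℝ)| + 1 := by rw [add_sq, sq_abs, s_sq]; ring
      _ ≤ (s + 1) ^ 2 := by linarith
  rw [enorm2_gridPoint_sub j hh, enorm2_gridPoint_sub j hh, ← hs]
  linarith [mul_le_mul_of_nonneg_left sqrt_le hh]

theorem abs_edgeDefect_sub_le_of_adjacent {j : Fin 2} (hg : ContDiff ℝ 3 g) (hh : 0 < h)
    {n m p q p' q' : ℤ} (hR : enorm2 (gridPoint a h (latticePoint j n m) - a) ≤ R)
    (hp : |p| ≤ |n| + 1 ∧ |p + 1| ≤ |n| + 1) (hq : |q| ≤ |m|)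
    (hp' : |p'| ≤ |n| + 1 ∧ |p' + 1| ≤ |n| + 1) (hq' : |q'| ≤ |m|)
    (adj : (p - p') ^ 2 + (q - q') ^ 2 ≤ 2) :
    |edgeDefect g h j (gridPoint a h (latticePoint j p q)) -
      edgeDefect g h j (gridPoint a h (latticePoint j p' q'))| ≤
      h ^ 3 / 12 * pureThirdOscillation a h R g := by
  have mem_disc {r s : ℤ} (hr : |r| ≤ |n| + 1) (hs : |s| ≤ |m|) :
      enorm2 (gridPoint a h (latticePoint j r s) - a) ≤ R + h :=
    (enorm2_gridPoint_sub_le_add hh.le hr hs).trans (by linarith)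
  refine abs_edgeDefect_sub_le_oscillation hg hh (mem_disc hp.1 hq) ?_ (mem_disc hp'.1 hq') ?_ ?_
  · exact gridPoint_latticePoint_add_single (a := a) j p q ▸ mem_disc hp.2 hq
  · exact gridPoint_latticePoint_add_single (a := a) j p' q' ▸ mem_disc hp'.2 hq'
  · rw [enorm2_gridPoint_sub_gridPoint j hh.le]
    gcongr
    exact_mod_cast adj

theorem exists_edge_correction (a : Fin 2 → ℝ) (hh : 0 < h) (R : ℝ) (hg : ContDiff ℝ 3 g)
    (j : Fin 2) :
    ∃ (c : ℝ) (e : (Fin 2 → ℤ) → ℝ),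
      (∀ k, e k + e (k + Pi.single j 1) = c - edgeDefect g h j (gridPoint a h k)) ∧
      ∀ k, enorm2 (gridPoint a h k - a) ≤ R →
        |e k| ≤ (|k 0| + |k 1|) * (h ^ 3 / 24 * pureThirdOscillation a h R g) := by
  obtain ⟨c, e, he, bound⟩ := exists_alternating_correction fun n m =>
    edgeDefect g h j (gridPoint a h (latticePoint j n m))
  have rev_ne : j.rev ≠ j := by fin_cases j <;> decide
  refine ⟨c, fun k => e (k j) (k j.rev), fun k => ?_, fun k hk => ?_⟩
  · simpa [latticePoint_apply_rev, rev_ne] using he (k j) (k j.rev)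
  · rw [← latticePoint_apply_rev j k] at hk
    have row (i : ℤ) (hi : |i| < |k j|) := abs_edgeDefect_sub_le_of_adjacent hg hh hk
      (p := i - 1) (p' := i) (by grind) le_rfl (by grind) le_rfl (by simp)
    have column (s : ℤ) (hs : s = 0 ∨ s = -1) (i : ℤ) (h1 : -|k j.rev| ≤ i) (h2 : i < |k j.rev|) :=
      abs_edgeDefect_sub_le_of_adjacent hg hh hk
        (p := s) (q := i) (p' := s) (q' := i + 1) (by grind) (by grind) (by grind) (by grind)
        (by simp)
    have sum_abs : |k j| + |k j.rev| = |k 0| + |k 1| := by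
      fin_cases j
      · rfl
      · exact add_comm _ _
    have := bound (k j) (k j.rev) _ row column
    rw [← Int.cast_add, sum_abs, Real.norm_eq_abs, Int.cast_add] at this
    exact this.trans_eq (by ring)

theorem exists_discreteConservative_eq_add (hh : h ≠ 0) {c : Fin 2 → ℝ}
    {e : Fin 2 → (Fin 2 → ℤ) → ℝ}
    (he : ∀ j k, e j k + e j (k + Pi.single j 1) = c j - edgeDefect g h j (gridPoint a h k)) :
    ∃ f, DiscreteConservative 2 a h f ∧
      ∀ k j, f (gridPoint a h k) j = pderiv2 j g (gridPoint a h k) + 2 / h * e j k := by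
  let f : (Fin 2 → ℝ) → Fin 2 → ℝ := Function.extend (gridPoint a h)
    (fun k j => pderiv2 j g (gridPoint a h k) + 2 / h * e j k) 0
  have f_apply (k : Fin 2 → ℤ) (j : Fin 2) :
      f (gridPoint a h k) j = pderiv2 j g (gridPoint a h k) + 2 / h * e j k :=
    congrFun ((gridPoint_injective a hh).extend_apply _ _ k) j
  suffices IsTrapezoidalPotential a h f fun x => g x + ∑ i, c i / h * x i from
    ⟨f, this.discreteConservative, f_apply⟩
  intro x hx j
  obtain ⟨k, rfl⟩ := exists_gridPoint_eq_of_inGrid hx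
  have linear_increment (x : Fin 2 → ℝ) :
      ∑ i, c i / h * (x + Pi.single j h : Fin 2 → ℝ) i = ∑ i, c i / h * x i + c j := by
    simp [mul_add, Finset.sum_add_distrib, Pi.single_apply, hh]
  have succ : gridPoint a h k + Pi.single j h = gridPoint a h (k + Pi.single j 1) := by
    simp [gridPoint_add_single]
  have recursion := he j k
  simp only [linear_increment]
  rw [edgeDefect, succ] at recursion
  rw [succ, f_apply, f_apply]
  field_simp
  linear_combination 2 * recursion

end Construction

/-- **Existence of a discrete conservative approximation of a gradient** (Lemma 4.1).
With `ε(h) = sup { |D_j³g(x) − D_j³g(y)| : |x−a|, |y−a| ≤ R+h, |x−y| ≤ h√2, j = 1,2 }`,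
there is a discrete conservative vector field `f` on `G(a,h)` with
`|f(x) − ∇g(x)| ≤ (R/6)·h·ε(h)` for all grid points `x` with `|x − a| ≤ R`. -/
theorem exists_discreteConservative_approx_grad
    (a : Fin 2 → ℝ) (h : ℝ) (hh : 0 < h) (R : ℝ) (hR : 0 < R)
    (g : (Fin 2 → ℝ) → ℝ) (hg : ContDiff ℝ 3 g) :
    ∃ f : (Fin 2 → ℝ) → Fin 2 → ℝ, DiscreteConservative 2 a h f ∧
      ∀ x : Fin 2 → ℝ, InGrid 2 a h x → enorm2 (fun i => x i - a i) ≤ R →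
        enorm2 (fun j => f x j - pderiv2 j g x)
          ≤ R / 6 * h *
            sSup {c : ℝ | ∃ x' y' : Fin 2 → ℝ, ∃ j : Fin 2,
              enorm2 (fun i => x' i - a i) ≤ R + h ∧ enorm2 (fun i => y' i - a i) ≤ R + h ∧
              enorm2 (fun i => x' i - y' i) ≤ h * Real.sqrt 2 ∧
              c = |pderiv2 j (pderiv2 j (pderiv2 j g)) x'
                    - pderiv2 j (pderiv2 j (pderiv2 j g)) y'|} := by
  choose c e he e_le using exists_edge_correction a hh R hg
  obtain ⟨f, f_conservative, f_apply⟩ := exists_discreteConservative_eq_add hh.ne' he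
  refine ⟨f, f_conservative, fun x hx hxR => ?_⟩
  obtain ⟨k, rfl⟩ := exists_gridPoint_eq_of_inGrid hx
  let y := gridPoint a h k - a
  let ε := pureThirdOscillation a h R g
  have hε : 0 ≤ ε := pureThirdOscillation_nonneg
  have abs_y (i : Fin 2) : |y i| = h * |(k i : ℝ)| := by simp [y, gridPoint, abs_mul, hh.le]
  have error_le (j : Fin 2) :
      |f (gridPoint a h k) j - pderiv2 j g (gridPoint a h k)| ≤ h * ε / 12 * (|y 0| + |y 1|) := by
    calc |f (gridPoint a h k) j - pderiv2 j g (gridPoint a h k)| = 2 / h * |e j k| := by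
          rw [f_apply, add_sub_cancel_left, abs_mul, abs_of_pos (by positivity)]
      _ ≤ 2 / h * ((|k 0| + |k 1|) * (h ^ 3 / 24 * ε)) := by gcongr; exact e_le j k hxR
      _ = h * ε / 12 * (|y 0| + |y 1|) := by
          rw [abs_y, abs_y]; push_cast; field_simp; ring
  calc _ ≤ 2 * (h * ε / 12) * enorm2 y := enorm2_le_of_abs_le (by positivity) error_le
    _ ≤ 2 * (h * ε / 12) * R := by gcongr; exact hxR
    _ = R / 6 * h * ε := by ring
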